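/- Let U ⊆ ℂⁿ be an open set and a ∈ U. Suppose ξ¹, …, ξⁿ : U → ℂⁿ are holomorphic vector fields that pairwise commute and whose values ξ¹(a), …, ξⁿ(a) span ℂⁿ. Then there exist an open neighbourhood U₀ of 0 in ℂⁿ and an injective holomorphic map ψ : U₀ → U with ψ(0) = a, whose derivative (Dψ)_z is invertible at every z ∈ U₀ (so ψ is a biholomorphism onto an open neighbourhood of a), such that (Dψ)_z(e_k) = ξᵏ(ψ(z)) for all z ∈ U₀ and all k = 1, …, n, where e₁, …, eₙ is the standard basis of ℂⁿ. -/

import Mathlib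

/-!
View the fields as one operator-valued map `A`, where `A y` sends `eₖ` to `ξᵏ(y)`. The dual coframe
`ω = A⁻¹` is a 1-form, and differentiating `ω y (A y c) = c` shows that it is closed because the
fields commute. By the Poincaré lemma `ω = Df` near `a` with `f a = 0`; since `ω a` is invertible,
`f` has a local inverse `ψ`, and `(Dψ)_z = ω(ψ z)⁻¹ = A (ψ z)`.
-/

open Set Filter Topology VectorField

section OperatorValuedMap

variable {𝕜 E F : Type*} [NontriviallyNormedField 𝕜]
  [NormedAddCommGroup E] [NormedSpace 𝕜 E] [NormedAddCommGroup F] [NormedSpace 𝕜 F]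

theorem eventually_isInvertible_of_continuousAt [CompleteSpace F] {X : Type*} [TopologicalSpace X]
    {A : X → F →L[𝕜] E} {x : X} (hA : ContinuousAt A x) (hx : (A x).IsInvertible) :
    ∀ᶠ y in 𝓝 x, (A y).IsInvertible := by
  obtain ⟨e, he⟩ := hx
  exact hA.preimage_mem_nhds (he ▸ e.nhds)

theorem differentiableAt_inverse_clm [CompleteSpace F] {A : E → F →L[𝕜] E} {x : E}
    (hA : DifferentiableAt 𝕜 A x) (hx : (A x).IsInvertible) :
    DifferentiableAt 𝕜 (fun y ↦ (A y).inverse) x :=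
  (hx.contDiffAt_map_inverse.differentiableAt one_ne_zero).comp x hA

theorem lieBracket_clm_apply {A : E → F →L[𝕜] E} {x : E} (hA : DifferentiableAt 𝕜 A x) (c d : F) :
    lieBracket 𝕜 (fun y ↦ A y c) (fun y ↦ A y d) x =
      fderiv 𝕜 A x (A x c) d - fderiv 𝕜 A x (A x d) c := by
  simp [lieBracket, fderiv_clm_apply hA (differentiableAt_const _)]

theorem fderiv_inverse_clm_apply [CompleteSpace F] {A : E → F →L[𝕜] E} {x : E}
    (hA : DifferentiableAt 𝕜 A x) (hx : (A x).IsInvertible) (v : E) (c : F) :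
    fderiv 𝕜 (fun y ↦ (A y).inverse) x v (A x c) = -(A x).inverse (fderiv 𝕜 A x v c) := by
  have hconst : (fun y ↦ (A y).inverse (A y c)) =ᶠ[𝓝 x] fun _ ↦ c := by
    filter_upwards [eventually_isInvertible_of_continuousAt hA.continuousAt hx] with y hy
    exact hy.inverse_apply_self c
  have hderiv := (differentiableAt_inverse_clm hA hx).hasFDerivAt.clm_apply
    (hA.hasFDerivAt.clm_apply (hasFDerivAt_const c x))
  have hzero := hderiv.unique ((hasFDerivAt_const c x).congr_of_eventuallyEq hconst)
  exact eq_neg_of_add_eq_zero_right (by simpa using DFunLike.congr_fun hzero v)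

theorem fderiv_inverse_clm_symm_of_lieBracket_eq_zero [CompleteSpace F] {A : E → F →L[𝕜] E} {x : E}
    (hA : DifferentiableAt 𝕜 A x) (hx : (A x).IsInvertible)
    (hcomm : ∀ c d, lieBracket 𝕜 (fun y ↦ A y c) (fun y ↦ A y d) x = 0) (v w : E) :
    fderiv 𝕜 (fun y ↦ (A y).inverse) x v w = fderiv 𝕜 (fun y ↦ (A y).inverse) x w v := by
  obtain ⟨c, rfl⟩ := hx.surjective v
  obtain ⟨d, rfl⟩ := hx.surjective w
  have hcd : fderiv 𝕜 A x (A x c) d = fderiv 𝕜 A x (A x d) c :=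
    sub_eq_zero.1 (lieBracket_clm_apply hA c d ▸ hcomm c d)
  rw [fderiv_inverse_clm_apply hA hx, fderiv_inverse_clm_apply hA hx, hcd]

end OperatorValuedMap

section LocalInverse

variable {𝕜 E F : Type*} [RCLike 𝕜]
  [NormedAddCommGroup E] [NormedSpace 𝕜 E] [NormedAddCommGroup F] [NormedSpace 𝕜 F]

theorem exists_forall_mem_ball_hasFDerivAt_of_fderiv_symmetric [CompleteSpace F]
    {ω : E → E →L[𝕜] F} {a : E} {r : ℝ} (hω : DifferentiableOn 𝕜 ω (Metric.ball a r))
    (hsymm : ∀ x ∈ Metric.ball a r, ∀ v w, fderiv 𝕜 ω x v w = fderiv 𝕜 ω x w v) :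
    ∃ f : E → F, ∀ x ∈ Metric.ball a r, HasFDerivAt f (ω x) x := by
  let : NormedSpace ℝ E := .restrictScalars ℝ 𝕜 E
  let : NormedSpace ℝ F := .restrictScalars ℝ 𝕜 F
  obtain ⟨f, hf⟩ :=
    (convex_ball a r).exists_forall_hasFDerivWithinAt_of_hasFDerivWithinAt_symmetric
      (fun x hx ↦
        ((hω.hasFDerivAt (Metric.isOpen_ball.mem_nhds hx)).restrictScalars ℝ).hasFDerivWithinAt)
      (fun x hx v _ w _ ↦ hsymm x hx v w)
  exact ⟨f, fun x hx ↦ (hf x hx).hasFDerivAt (Metric.isOpen_ball.mem_nhds hx)⟩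

theorem exists_openPartialHomeomorph_hasFDerivAt_symm [CompleteSpace E]
    {f : E → F} {f' : E → E →L[𝕜] F} {s : Set E} {a : E} (hs : IsOpen s) (ha : a ∈ s)
    (hf : ∀ x ∈ s, HasFDerivAt f (f' x) x) (hcont : ContinuousAt f' a)
    (hinv : ∀ x ∈ s, (f' x).IsInvertible) :
    ∃ e : OpenPartialHomeomorph E F, ⇑e = f ∧ a ∈ e.source ∧ e.source ⊆ s ∧
      ∀ z ∈ e.target, HasFDerivAt e.symm (f' (e.symm z)).inverse z := by
  obtain ⟨L, hL⟩ := hinv a ha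
  have hstrict : HasStrictFDerivAt f (L : E →L[𝕜] F) a :=
    hL ▸ hasStrictFDerivAt_of_hasFDerivAt_of_continuousAt
      (eventually_of_mem (hs.mem_nhds ha) hf) hcont
  let e := (hstrict.toOpenPartialHomeomorph f).restrOpen s hs
  refine ⟨e, rfl, ⟨hstrict.mem_toOpenPartialHomeomorph_source, ha⟩, fun x hx ↦ hx.2, ?_⟩
  intro z hz
  have hzs : e.symm z ∈ s := (e.map_target hz).2
  obtain ⟨M, hM⟩ := hinv _ hzs
  rw [← hM, ContinuousLinearMap.inverse_equiv]
  exact e.hasFDerivAt_symm hz (hM ▸ hf _ hzs)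

theorem exists_openPartialHomeomorph_hasFDerivAt_of_lieBracket_eq_zero [CompleteSpace F]
    {A : E → F →L[𝕜] E} {U : Set E} {a : E} (hU : U ∈ 𝓝 a) (hA : ∀ x ∈ U, DifferentiableAt 𝕜 A x)
    (hcomm : ∀ c d, ∀ x ∈ U, lieBracket 𝕜 (fun y ↦ A y c) (fun y ↦ A y d) x = 0)
    (ha : (A a).IsInvertible) :
    ∃ e : OpenPartialHomeomorph F E, 0 ∈ e.source ∧ e 0 = a ∧ e.target ⊆ U ∧
      ∀ z ∈ e.source, (A (e z)).IsInvertible ∧ HasFDerivAt e (A (e z)) z := by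
  have : CompleteSpace E := by
    obtain ⟨L, -⟩ := ha
    exact (completeSpace_congr (e := L.toEquiv) L.isUniformEmbedding).1 ‹_›
  obtain ⟨r, hr, hball⟩ := Metric.mem_nhds_iff.1 <| inter_mem hU <|
    eventually_isInvertible_of_continuousAt (hA a (mem_of_mem_nhds hU)).continuousAt ha
  have hdiff x (hx : x ∈ Metric.ball a r) : DifferentiableAt 𝕜 (fun y ↦ (A y).inverse) x :=
    differentiableAt_inverse_clm (hA x (hball hx).1) (hball hx).2
  have haB : a ∈ Metric.ball a r := Metric.mem_ball_self hr
  obtain ⟨f, hf⟩ := exists_forall_mem_ball_hasFDerivAt_of_fderiv_symmetric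
    (fun x hx ↦ (hdiff x hx).differentiableWithinAt)
    (fun x hx ↦ fderiv_inverse_clm_symm_of_lieBracket_eq_zero (hA x (hball hx).1) (hball hx).2
      fun c d ↦ hcomm c d x (hball hx).1)
  obtain ⟨e, he, hae, hes, he'⟩ := exists_openPartialHomeomorph_hasFDerivAt_symm
    Metric.isOpen_ball haB (fun x hx ↦ (hf x hx).sub_const (f a)) (hdiff a haB).continuousAt
    (fun x hx ↦ (hball hx).2.inverse)
  have hea : e a = 0 := by simp [he]
  refine ⟨e.symm, hea ▸ e.map_source hae, hea ▸ e.left_inv hae, fun x hx ↦ (hball (hes hx)).1, ?_⟩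
  intro z hz
  have hAz : (A (e.symm z)).IsInvertible := (hball (hes (e.map_target hz))).2
  exact ⟨hAz, hAz.inverse_inverse ▸ he' z hz⟩

end LocalInverse

section Frame

variable {𝕜 ι E : Type*} [NontriviallyNormedField 𝕜] [CompleteSpace 𝕜] [Fintype ι] [DecidableEq ι]
  [NormedAddCommGroup E] [NormedSpace 𝕜 E]

variable (𝕜) in
/-- The operator `𝕜^ι → E` attached to a family of vectors `v`, sending `eₖ` to `v k`. Applied to
the values `ξ k y` of a family of vector fields, it packages them into one operator-valued map. -/
noncomputable def frameMap (v : ι → E) : (ι → 𝕜) →L[𝕜] E :=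
  (ContinuousLinearEquiv.piRing (𝕜 := 𝕜) (E := E) ι).symm v

theorem frameMap_apply (v : ι → E) (c : ι → 𝕜) : frameMap 𝕜 v c = ∑ k, c k • v k :=
  LinearEquiv.piRing_symm_apply (R := 𝕜) (S := 𝕜) v c

theorem frameMap_single (v : ι → E) (k : ι) : frameMap 𝕜 v (Pi.single k 1) = v k := by
  simp [frameMap_apply, Pi.single_apply]

theorem isInvertible_frameMap {v : ι → E} (hli : LinearIndependent 𝕜 v)
    (hspan : Submodule.span 𝕜 (range v) = ⊤) : (frameMap 𝕜 v).IsInvertible := by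
  refine ⟨(Module.Basis.mk hli hspan.ge).equivFunL.symm, ?_⟩
  ext c
  exact ((Module.Basis.mk hli hspan.ge).equivFun_symm_apply c).trans (by simp [frameMap_apply])

theorem differentiableAt_frameMap {ξ : ι → E → E} {x : E}
    (hξ : ∀ k, DifferentiableAt 𝕜 (ξ k) x) :
    DifferentiableAt 𝕜 (fun y ↦ frameMap 𝕜 (ξ · y)) x :=
  (ContinuousLinearEquiv.piRing (𝕜 := 𝕜) (E := E) ι).symm.differentiableAt.comp x
    (differentiableAt_pi.2 hξ)

theorem lieBracket_frameMap {ξ : ι → E → E} {x : E} (hξ : ∀ k, DifferentiableAt 𝕜 (ξ k) x)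
    (c d : ι → 𝕜) :
    lieBracket 𝕜 (fun y ↦ frameMap 𝕜 (ξ · y) c) (fun y ↦ frameMap 𝕜 (ξ · y) d) x =
      ∑ k, ∑ l, (c k * d l) • lieBracket 𝕜 (ξ k) (ξ l) x := by
  have hfderiv (b : ι → 𝕜) :
      fderiv 𝕜 (fun y ↦ frameMap 𝕜 (ξ · y) b) x = ∑ k, b k • fderiv 𝕜 (ξ k) x := by
    simp only [frameMap_apply]
    exact (HasFDerivAt.fun_sum fun k _ ↦ (hξ k).hasFDerivAt.fun_const_smul (b k)).fderiv
  calc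
    _ = ∑ k, ∑ l, (c k * d l) • fderiv 𝕜 (ξ l) x (ξ k x) -
        ∑ l, ∑ k, (d l * c k) • fderiv 𝕜 (ξ k) x (ξ l x) := by
      rw [lieBracket, hfderiv, hfderiv]
      simp only [frameMap_apply, map_sum, map_smul, sum_apply, smul_apply, Finset.smul_sum,
        smul_smul]
    _ = ∑ k, ∑ l, (c k * d l) • lieBracket 𝕜 (ξ k) (ξ l) x := by
      rw [Finset.sum_comm (f := fun l k ↦ (d l * c k) • fderiv 𝕜 (ξ k) x (ξ l x))]
      simp only [lieBracket, smul_sub, Finset.sum_sub_distrib, mul_comm]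

end Frame

theorem stmt_1_general {𝕜 ι E : Type*} [RCLike 𝕜] [Finite ι] [DecidableEq ι]
    [NormedAddCommGroup E] [NormedSpace 𝕜 E] (U : Set E) (hUopen : IsOpen U) (a : E) (ha : a ∈ U)
    (ξ : ι → E → E) (hξ : ∀ k, DifferentiableOn 𝕜 (ξ k) U)
    (hcomm : ∀ k l, ∀ z ∈ U, lieBracket 𝕜 (ξ k) (ξ l) z = 0)
    (hli : LinearIndependent 𝕜 fun k ↦ ξ k a)
    (hspan : Submodule.span 𝕜 (range fun k ↦ ξ k a) = ⊤) :
    ∃ (U₀ : Set (ι → 𝕜)) (ψ : (ι → 𝕜) → E),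
      IsOpen U₀ ∧ 0 ∈ U₀ ∧ ψ 0 = a ∧ MapsTo ψ U₀ U ∧ InjOn ψ U₀ ∧ DifferentiableOn 𝕜 ψ U₀ ∧
      IsOpen (ψ '' U₀) ∧ (∀ z ∈ U₀, Function.Bijective (fderiv 𝕜 ψ z)) ∧
      (∀ z ∈ U₀, ∀ k, fderiv 𝕜 ψ z (Pi.single k 1) = ξ k (ψ z)) := by
  have := Fintype.ofFinite ι
  have hξ' x (hx : x ∈ U) k : DifferentiableAt 𝕜 (ξ k) x :=
    (hξ k).differentiableAt (hUopen.mem_nhds hx)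
  have hbracket c d x (hx : x ∈ U) :
      lieBracket 𝕜 (fun y ↦ frameMap 𝕜 (ξ · y) c) (fun y ↦ frameMap 𝕜 (ξ · y) d) x = 0 := by
    simp [lieBracket_frameMap (hξ' x hx), hcomm _ _ x hx]
  obtain ⟨e, h0, he0, heU, he⟩ := exists_openPartialHomeomorph_hasFDerivAt_of_lieBracket_eq_zero
    (hUopen.mem_nhds ha) (fun x hx ↦ differentiableAt_frameMap (hξ' x hx)) hbracket
    (isInvertible_frameMap hli hspan)
  refine ⟨e.source, e, e.open_source, h0, he0, fun z hz ↦ heU (e.map_source hz), e.injOn,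
    fun z hz ↦ (he z hz).2.differentiableAt.differentiableWithinAt,
    e.image_source_eq_target ▸ e.open_target, fun z hz ↦ ?_, fun z hz k ↦ ?_⟩
  · exact (he z hz).2.fderiv ▸ (he z hz).1.bijective
  · rw [(he z hz).2.fderiv, frameMap_single]

/-- Let `U ⊆ ℂⁿ` be open and `a ∈ U`. Suppose `ξ¹, …, ξⁿ` are
holomorphic vector fields on `U` that pairwise commute and whose values at `a`
span `ℂⁿ`. Then there is an open neighbourhood `U₀` of `0` and an injective
holomorphic map `ψ : U₀ → U` with `ψ 0 = a`, with invertible derivative at every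
point (so `ψ` is a biholomorphism onto an open neighbourhood of `a`), such that
`(Dψ)_z(e_k) = ξᵏ(ψ z)` for all `z ∈ U₀` and `k`. -/
theorem stmt_1 {n : ℕ} (U : Set (Fin n → ℂ)) (hUopen : IsOpen U)
    (a : Fin n → ℂ) (ha : a ∈ U)
    (ξ : Fin n → ((Fin n → ℂ) → (Fin n → ℂ)))
    (hξ : ∀ k, DifferentiableOn ℂ (ξ k) U)
    (hcomm : ∀ k l, ∀ z ∈ U,
      fderiv ℂ (ξ l) z (ξ k z) - fderiv ℂ (ξ k) z (ξ l z) = 0)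
    (hspan : Submodule.span ℂ (Set.range fun k => ξ k a) = ⊤) :
    ∃ (U₀ : Set (Fin n → ℂ)) (ψ : (Fin n → ℂ) → (Fin n → ℂ)),
      IsOpen U₀ ∧ (0 : Fin n → ℂ) ∈ U₀ ∧ ψ 0 = a ∧
      Set.MapsTo ψ U₀ U ∧ Set.InjOn ψ U₀ ∧
      DifferentiableOn ℂ ψ U₀ ∧
      IsOpen (ψ '' U₀) ∧
      (∀ z ∈ U₀, Function.Bijective (fderiv ℂ ψ z)) ∧
      (∀ z ∈ U₀, ∀ k : Fin n, fderiv ℂ ψ z (Pi.single k 1) = ξ k (ψ z)) :=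
  stmt_1_general U hUopen a ha ξ hξ hcomm
    (linearIndependent_of_top_le_span_of_card_eq_finrank hspan.ge (by simp)) hspan
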